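/- Let H_Z be a separable Hilbert space with orthonormal basis (e_k)_{k∈ℕ}, and for a random element Z of H_Z write Z_k = ⟨e_k, Z⟩. Let 𝒫 be the family of distributions of triples (X, Y, Z) with values in ℝ × ℝ × H_Z that are jointly Gaussian with injective covariance operator and for which there exists r ∈ ℕ such that (X, Y) ⊥⊥ (Z_{r+1}, Z_{r+2}, …) | (Z_1, …, Z_r). Let 𝒫₀ ⊆ 𝒫 be the subset of distributions under which X ⊥⊥ Y | Z, let 𝒬 = 𝒫 \ 𝒫₀, fix Q ∈ 𝒬, and let 𝒫₀^Q = {P ∈ 𝒫₀ : the marginal distribution of Z under P equals that under Q}. Then for every n ∈ ℕ and every measurable test ψ_n : (ℝ × ℝ × H_Z)^n → {0, 1}, Q^{⊗n}(ψ_n = 1) ≤ sup_{P ∈ 𝒫₀^Q} P^{⊗n}(ψ_n = 1). -/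

import Mathlib

open MeasureTheory ProbabilityTheory Filter
open scoped ENNReal NNReal RealInnerProductSpace

noncomputable section

/-- A measure on a real normed space is (jointly) Gaussian if every continuous linear
functional pushes it forward to a (possibly degenerate) Gaussian distribution on `ℝ`. -/
def IsGaussianMeasure {E : Type*} [NormedAddCommGroup E] [NormedSpace ℝ E] [MeasurableSpace E]
    (μ : Measure E) : Prop :=
  ∀ L : E →L[ℝ] ℝ, ∃ (m : ℝ) (v : ℝ≥0), μ.map L = gaussianReal m v

/-- The covariance form of a measure, evaluated at two continuous linear functionals. -/
def covForm {E : Type*} [NormedAddCommGroup E] [NormedSpace ℝ E] [MeasurableSpace E]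
    (μ : Measure E) (L₁ L₂ : E →L[ℝ] ℝ) : ℝ :=
  ∫ x, (L₁ x - ∫ y, L₁ y ∂μ) * (L₂ x - ∫ y, L₂ y ∂μ) ∂μ

/-- The covariance operator of `μ` is injective: if `Cov(L₁, L₂) = 0` for every continuous
linear functional `L₂`, then `L₁ = 0`.  On a Hilbert space this is precisely injectivity of
the covariance operator. -/
def HasInjectiveCovariance {E : Type*} [NormedAddCommGroup E] [NormedSpace ℝ E] [MeasurableSpace E]
    (μ : Measure E) : Prop :=
  ∀ L₁ : E →L[ℝ] ℝ, (∀ L₂ : E →L[ℝ] ℝ, covForm μ L₁ L₂ = 0) → L₁ = 0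

/-- `X ⫫ Y | Z` under `μ`: for all bounded measurable real-valued `f, g`,
`E(f(X) g(Y) | Z) = E(f(X) | Z) ⬝ E(g(Y) | Z)` almost surely. -/
def CondIndepGiven {Ω α β γ : Type*} [MeasurableSpace Ω] [MeasurableSpace α] [MeasurableSpace β]
    [MeasurableSpace γ] (μ : Measure Ω) (X : Ω → α) (Y : Ω → β) (Z : Ω → γ) : Prop :=
  ∀ (f : α → ℝ) (g : β → ℝ), Measurable f → Measurable g →
    (∃ C, ∀ a, |f a| ≤ C) → (∃ C, ∀ b, |g b| ≤ C) →
    μ[(fun ω => f (X ω) * g (Y ω))|MeasurableSpace.comap Z inferInstance] =ᵐ[μ]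
      fun ω => ((μ[(fun ω' => f (X ω'))|MeasurableSpace.comap Z inferInstance]) ω) *
        ((μ[(fun ω' => g (Y ω'))|MeasurableSpace.comap Z inferInstance]) ω)

/-!
Under `Q` the regressions of `X` and `Y` on `Z` involve finitely many coordinates only, and their
residuals are `α T + ξ` and `β T + η` with a common standard Gaussian `T` and independent Gaussian
noises `ξ`, `η`, all independent of `Z`. The dependence of `X` and `Y` given `Z` is thus due to `T`
alone. Replacing `T` by `T_{k,w}(Z) = k^{-1/2} ∑_{j < k} w_j W_j(Z)`, where the `W_j` are i.i.d.
standard Gaussian functionals of finitely many coordinates of `Z`, gives a law in the sparse null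
model with the same marginal of `Z`.

Average the rejection probability of these null laws over i.i.d. standard Gaussian weights `w`.
Given the sample `z_1, …, z_n` of `Z`, the latents `T_{k,w}(z_1), …, T_{k,w}(z_n)` are jointly
Gaussian in `w`, and their covariance matrix, with entries `k^{-1} ∑_{j < k} W_j(z_i) W_j(z_l)`,
tends almost surely to the identity by the strong law of large numbers. The rejection probability
given the latents depends continuously on them because the noise has a density, so the averages
tend to the power at `Q`.
-/

open scoped Topology

theorem absolutelyContinuous_pi {n : ℕ} {α : Fin n → Type*} [∀ i, MeasurableSpace (α i)]
    {μ ν : ∀ i, Measure (α i)} [∀ i, SigmaFinite (μ i)] [∀ i, SigmaFinite (ν i)]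
    (h : ∀ i, μ i ≪ ν i) : Measure.pi μ ≪ Measure.pi ν := by
  induction n with
  | zero => rw [Measure.pi_of_empty, Measure.pi_of_empty]
  | succ n ih =>
    rw [← (measurePreserving_piFinSuccAbove μ 0).symm.map_eq,
      ← (measurePreserving_piFinSuccAbove ν 0).symm.map_eq]
    exact ((h 0).prod (ih fun i => h _)).map (MeasurableEquiv.measurable _)

-- Translation acts continuously on `L¹`, in particular on the density of `m`.
theorem continuous_measure_preimage_add_left {G : Type*} [AddCommGroup G] [TopologicalSpace G]
    [IsTopologicalAddGroup G] [R1Space G] [MeasurableSpace G] [BorelSpace G] {μ : Measure G}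
    [SigmaFinite μ] [IsLocallyFiniteMeasure μ] [μ.InnerRegularCompactLTTop] [μ.IsAddLeftInvariant]
    {m : Measure G} [IsFiniteMeasure m] (hm : m ≪ μ) {S : Set G} (hS : MeasurableSet S) :
    Continuous fun v => m ((v + ·) ⁻¹' S) := by
  have hf : Integrable (fun x => (m.rnDeriv μ x).toReal) μ := Measure.integrable_toReal_rnDeriv
  let shift : G → C(G, G) := fun v => ⟨fun x => -v + x, by fun_prop⟩
  have hshift : Continuous shift := by
    refine ContinuousMap.continuous_of_continuous_uncurry _ ?_
    simp only [Function.uncurry_def, shift, ContinuousMap.coe_mk]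
    fun_prop
  have hpres (v : G) : MeasurePreserving (shift v) μ μ := measurePreserving_add_left μ (-v)
  have htrans : Continuous fun v => ∫ x in S,
      (Lp.compMeasurePreserving (shift v) (hpres v) (hf.toL1 _) : G → ℝ) x ∂μ :=
    (continuous_setIntegral S).comp
      (continuous_const.compMeasurePreservingLp hshift hpres ENNReal.one_ne_top)
  suffices h : ∀ v, m ((v + ·) ⁻¹' S) = ENNReal.ofReal (∫ x in S,
      (Lp.compMeasurePreserving (shift v) (hpres v) (hf.toL1 _) : G → ℝ) x ∂μ) by
    simp only [h]
    exact ENNReal.continuous_ofReal.comp htrans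
  intro v
  have hdensity : (Lp.compMeasurePreserving (shift v) (hpres v) (hf.toL1 _) : G → ℝ) =ᵐ[μ]
      fun x => (m.rnDeriv μ (-v + x)).toReal :=
    (Lp.coeFn_compMeasurePreserving _ (hpres v)).trans
      ((hpres v).quasiMeasurePreserving.ae_eq_comp hf.coeFn_toL1)
  have hchange := (measurePreserving_add_left μ v).setIntegral_preimage_emb
    (measurableEmbedding_addLeft v) (fun x => (m.rnDeriv μ (-v + x)).toReal) S
  simp only [neg_add_cancel_left] at hchange
  rw [setIntegral_congr_ae hS (hdensity.mono fun x hx _ => hx), ← hchange,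
    Measure.setIntegral_toReal_rnDeriv hm, measureReal_def,
    ENNReal.ofReal_toReal (measure_ne_top _ _)]

theorem pi_prod_apply {ι α β : Type*} [Fintype ι] [MeasurableSpace α] [MeasurableSpace β]
    (μ : Measure α) (ν : Measure β) [SigmaFinite μ] [SigmaFinite ν] {S : Set (ι → α × β)}
    (hS : MeasurableSet S) :
    (Measure.pi fun _ => μ.prod ν) S =
      ∫⁻ y, (Measure.pi fun _ => μ) {x | (fun i => (x i, y i)) ∈ S} ∂Measure.pi fun _ => ν := by
  rw [← (measurePreserving_arrowProdEquivProdArrow α β ι (fun _ => μ) fun _ => ν).symm.map_eq,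
    Measure.map_apply (MeasurableEquiv.measurable _) hS,
    Measure.prod_apply_symm (hS.preimage (MeasurableEquiv.measurable _))]
  rfl

section WeightedSums

variable {ι : Type*}

/-- The normalised sum `k^{-1/2} ∑_{j < k} w_j a_j` of vectors `a_j` with weights `w_j`. -/
def normalizedSum (a : ℕ → ι → ℝ) (k : ℕ) (w : Fin k → ℝ) (i : ι) : ℝ :=
  (√k)⁻¹ * ∑ j, w j * a j i

theorem measurable_normalizedSum (a : ℕ → ι → ℝ) (k : ℕ) : Measurable (normalizedSum a k) := by
  unfold normalizedSum
  fun_prop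

theorem measurable_toLp_normalizedSum (a : ℕ → ι → ℝ) (k : ℕ) :
    Measurable fun w => WithLp.toLp 2 (normalizedSum a k w) :=
  (WithLp.measurable_toLp 2 _).comp (measurable_normalizedSum a k)

theorem charFun_map_normalizedSum [Fintype ι] (a : ℕ → ι → ℝ) (k : ℕ) (t : EuclideanSpace ℝ ι) :
    charFun ((Measure.pi fun _ : Fin k => gaussianReal 0 1).map
      fun w => WithLp.toLp 2 (normalizedSum a k w)) t =
      Complex.exp (-(((∑ j ∈ Finset.range k, (∑ i, a j i * t i) ^ 2) / k : ℝ) : ℂ) / 2) := by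
  have hinner (w : Fin k → ℝ) : ⟪WithLp.toLp 2 (normalizedSum a k w), t⟫ =
      ∑ j : Fin k, (√k)⁻¹ * (∑ i, a j i * t i) * w j := by
    simp only [normalizedSum, PiLp.inner_apply, RCLike.inner_apply, conj_trivial, Finset.mul_sum,
      Finset.sum_mul]
    rw [Finset.sum_comm]
    exact Finset.sum_congr rfl fun j _ => Finset.sum_congr rfl fun i _ => by ring
  rw [charFun_apply, integral_map (measurable_toLp_normalizedSum a k).aemeasurable (by fun_prop)]
  simp only [hinner, Complex.ofReal_sum, Finset.sum_mul, Complex.exp_sum]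
  rw [integral_fintype_prod_eq_prod (fun j : Fin k => fun x : ℝ =>
    Complex.exp (((√k)⁻¹ * (∑ i, a j i * t i) * x : ℝ) * Complex.I))]
  have hfactor (c : ℝ) : ∫ x, Complex.exp ((c * x : ℝ) * Complex.I) ∂gaussianReal 0 1 =
      Complex.exp (-((c ^ 2 : ℝ) : ℂ) / 2) := by
    simpa [charFun_apply_real, neg_div] using charFun_gaussianReal (μ := 0) (v := 1) c
  simp only [hfactor]
  rw [← Complex.exp_sum, ← Finset.sum_div, Finset.sum_neg_distrib, ← Complex.ofReal_sum]
  simp only [mul_pow, inv_pow, Real.sq_sqrt (Nat.cast_nonneg k)]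
  rw [← Finset.mul_sum, Finset.sum_range, div_eq_inv_mul (∑ j : Fin k, _) (k : ℝ)]

theorem tendsto_average_sq_sum [Fintype ι] [DecidableEq ι] {a : ℕ → ι → ℝ}
    (hgram : ∀ i i', Tendsto (fun k : ℕ => (∑ j ∈ Finset.range k, a j i * a j i') / (k : ℝ)) atTop
      (𝓝 (if i = i' then 1 else 0))) (t : ι → ℝ) :
    Tendsto (fun k : ℕ => (∑ j ∈ Finset.range k, (∑ i, a j i * t i) ^ 2) / (k : ℝ)) atTop
      (𝓝 (∑ i, t i ^ 2)) := by
  have hexpand (k : ℕ) : (∑ j ∈ Finset.range k, (∑ i, a j i * t i) ^ 2) / (k : ℝ) =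
      ∑ i, ∑ i', t i * t i' * ((∑ j ∈ Finset.range k, a j i * a j i') / k) := by
    simp only [sq, Finset.sum_mul_sum, Finset.sum_div]
    rw [Finset.sum_comm]
    refine Finset.sum_congr rfl fun i _ => ?_
    rw [Finset.sum_comm]
    simp only [Finset.mul_sum]
    exact Finset.sum_congr rfl fun i' _ => Finset.sum_congr rfl fun j _ => by ring
  have hlimit : ∑ i, t i ^ 2 = ∑ i, ∑ i', t i * t i' * (if i = i' then 1 else 0) := by
    simp [sq]
  rw [hlimit]
  simp only [hexpand]
  exact tendsto_finsetSum _ fun i _ => tendsto_finsetSum _ fun i' _ =>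
    (hgram i i').const_mul (t i * t i')

theorem tendsto_lintegral_normalizedSum [Fintype ι] {a : ℕ → ι → ℝ}
    (hquad : ∀ t : ι → ℝ, Tendsto (fun k : ℕ =>
      (∑ j ∈ Finset.range k, (∑ i, a j i * t i) ^ 2) / (k : ℝ)) atTop (𝓝 (∑ i, t i ^ 2)))
    {G : (ι → ℝ) → ℝ≥0∞} (hG : Continuous G) {C : ℝ≥0} (hC : ∀ t, G t ≤ C) :
    Tendsto (fun k => ∫⁻ w, G (normalizedSum a k w) ∂Measure.pi fun _ : Fin k => gaussianReal 0 1)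
      atTop (𝓝 (∫⁻ t, G t ∂Measure.pi fun _ : ι => gaussianReal 0 1)) := by
  let law (k : ℕ) : ProbabilityMeasure (EuclideanSpace ℝ ι) :=
    ⟨(Measure.pi fun _ : Fin k => gaussianReal 0 1).map
      fun w => WithLp.toLp 2 (normalizedSum a k w),
      Measure.isProbabilityMeasure_map (measurable_toLp_normalizedSum a k).aemeasurable⟩
  have hlaw : Tendsto law atTop (𝓝 ⟨stdGaussian (EuclideanSpace ℝ ι), inferInstance⟩) := by
    refine ProbabilityMeasure.tendsto_of_tendsto_charFun fun t => ?_
    simp only [law, ProbabilityMeasure.coe_mk, charFun_map_normalizedSum, charFun_stdGaussian]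
    have hexp : Continuous fun x : ℝ => Complex.exp (-(x : ℂ) / 2) := by fun_prop
    have := (hexp.tendsto _).comp (hquad t)
    simpa only [← EuclideanSpace.real_norm_sq_eq, Complex.ofReal_pow] using! this
  have hGtop (t : ι → ℝ) : G t ≠ ∞ := ((hC t).trans_lt ENNReal.coe_lt_top).ne
  have hbound (t : ι → ℝ) : ((G t).toNNReal : ℝ) ≤ C :=
    NNReal.coe_le_coe.2 (ENNReal.toNNReal_mono ENNReal.coe_ne_top (hC t))
  let test : BoundedContinuousFunction (EuclideanSpace ℝ ι) ℝ≥0 :=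
    BoundedContinuousFunction.mkOfBound
      ⟨fun x => (G (WithLp.ofLp x)).toNNReal, ENNReal.continuousOn_toNNReal.comp_continuous
        (by fun_prop) fun x => hGtop _⟩ C fun x y => by
      rw [NNReal.dist_eq]
      exact abs_sub_le_of_nonneg_of_le (NNReal.coe_nonneg _) (hbound x) (NNReal.coe_nonneg _)
        (hbound y)
  have htest (x : EuclideanSpace ℝ ι) : (test x : ℝ≥0∞) = G (WithLp.ofLp x) :=
    ENNReal.coe_toNNReal (hGtop _)
  have hconv := ProbabilityMeasure.tendsto_iff_forall_lintegral_tendsto.1 hlaw test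
  simp only [law, ProbabilityMeasure.coe_mk, ← map_pi_eq_stdGaussian, htest] at hconv
  have hGmeas : Measurable fun x : EuclideanSpace ℝ ι => G (WithLp.ofLp x) := by fun_prop
  simpa only [lintegral_map hGmeas (measurable_toLp_normalizedSum a _),
    lintegral_map hGmeas (WithLp.measurable_toLp 2 _)] using hconv

end WeightedSums

section GramMatrix

variable {ι α : Type*} [Fintype ι] [MeasurableSpace α] {ν : Measure α} [IsProbabilityMeasure ν]

theorem map_pi_comp {β : Type*} [MeasurableSpace β] {f : α → β} (hf : Measurable f) :
    (Measure.pi fun _ : ι => ν).map (fun z i => f (z i)) = Measure.pi fun _ : ι => ν.map f := by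
  have := Measure.isProbabilityMeasure_map (μ := ν) hf.aemeasurable
  exact Measure.pi_map_pi fun _ => hf.aemeasurable

theorem indepFun_pi_comp {β γ : Type*} [MeasurableSpace β] [MeasurableSpace γ] {f : α → β}
    {g : α → γ} (hf : Measurable f) (hg : Measurable g) (hfg : IndepFun f g ν) :
    IndepFun (fun z i => f (z i)) (fun z i => g (z i)) (Measure.pi fun _ : ι => ν) := by
  have := Measure.isProbabilityMeasure_map (μ := ν) hf.aemeasurable
  have := Measure.isProbabilityMeasure_map (μ := ν) hg.aemeasurable
  rw [indepFun_iff_map_prod_eq_prod_map_map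
    (Measurable.aemeasurable (by fun_prop)) (Measurable.aemeasurable (by fun_prop)), map_pi_comp hf,
    map_pi_comp hg, ← (measurePreserving_arrowProdEquivProdArrow β γ ι (fun _ => ν.map f)
      fun _ => ν.map g).map_eq, ← (indepFun_iff_map_prod_eq_prod_map_map hf.aemeasurable
      hg.aemeasurable).1 hfg, ← map_pi_comp (hf.prodMk hg),
    Measure.map_map (MeasurableEquiv.measurable _) (by fun_prop)]
  rfl

theorem integral_mul_pi_of_standardized [DecidableEq ι] {κ : Measure ℝ} [IsProbabilityMeasure κ]
    (hmem : MemLp id 2 κ) (hmean : ∫ x, x ∂κ = 0) (hvar : Var[id; κ] = 1) (i i' : ι) :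
    ∫ y, y i * y i' ∂(Measure.pi fun _ : ι => κ) = if i = i' then 1 else 0 := by
  split_ifs with h
  · subst h
    rw [integral_comp_eval (μ := fun _ : ι => κ) (f := fun x => x * x) (by fun_prop)]
    rw [variance_eq_sub hmem] at hvar
    simpa [hmean, sq] using hvar
  · have hindep : iIndepFun (fun (i : ι) (y : ι → ℝ) => y i) (Measure.pi fun _ : ι => κ) :=
      iIndepFun_pi (X := fun _ => id) fun _ => aemeasurable_id
    have hcoord (i : ι) : ∫ y, y i ∂(Measure.pi fun _ : ι => κ) = 0 := by
      rw [integral_comp_eval (μ := fun _ : ι => κ) (f := fun x => x) (by fun_prop), hmean]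
    have hmeas (i : ι) : AEStronglyMeasurable (fun y : ι → ℝ => y i) (Measure.pi fun _ => κ) :=
      (measurable_pi_apply i).aestronglyMeasurable
    rw [(hindep.indepFun h).integral_fun_mul_eq_mul_integral (hmeas i) (hmeas i'), hcoord, zero_mul]

theorem ae_tendsto_average_gram [DecidableEq ι] {κ : Measure ℝ} [IsProbabilityMeasure κ]
    (hmem : MemLp id 2 κ) (hmean : ∫ x, x ∂κ = 0) (hvar : Var[id; κ] = 1)
    {W : ℕ → α → ℝ} (hW : ∀ j, Measurable (W j)) (hlaw : ∀ j, ν.map (W j) = κ)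
    (hindep : Pairwise fun i j => IndepFun (W i) (W j) ν) (i i' : ι) :
    ∀ᵐ z ∂Measure.pi fun _ : ι => ν,
      Tendsto (fun k : ℕ => (∑ j ∈ Finset.range k, W j (z i) * W j (z i')) / (k : ℝ)) atTop
        (𝓝 (if i = i' then 1 else 0)) := by
  let sample (j : ℕ) (z : ι → α) (i : ι) : ℝ := W j (z i)
  have hsample (j : ℕ) : Measurable (sample j) := by fun_prop
  have hsampleLaw (j : ℕ) : (Measure.pi fun _ => ν).map (sample j) = Measure.pi fun _ : ι => κ := by
    rw [map_pi_comp (hW j), hlaw]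
  have hcoord (i : ι) : MemLp (fun y : ι → ℝ => y i) 2 (Measure.pi fun _ : ι => κ) :=
    hmem.comp_measurePreserving (measurePreserving_eval _ i)
  have hprod : Measurable fun y : ι → ℝ => y i * y i' := by fun_prop
  have hint : Integrable (fun z : ι → α => W 0 (z i) * W 0 (z i')) (Measure.pi fun _ => ν) := by
    refine (integrable_map_measure (g := fun y : ι → ℝ => y i * y i') (by fun_prop)
      (hsample 0).aemeasurable).1 ?_
    rw [hsampleLaw]
    exact (hcoord i).integrable_mul (hcoord i')
  have hlimit : ∫ z : ι → α, W 0 (z i) * W 0 (z i') ∂(Measure.pi fun _ => ν) =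
      if i = i' then 1 else 0 := by
    rw [← integral_mul_pi_of_standardized hmem hmean hvar i i', ← hsampleLaw 0,
      integral_map (hsample 0).aemeasurable (by fun_prop)]
  have hident (j : ℕ) : IdentDistrib (sample j) (sample 0) (Measure.pi fun _ => ν)
      (Measure.pi fun _ => ν) :=
    ⟨(hsample j).aemeasurable, (hsample 0).aemeasurable, by rw [hsampleLaw, hsampleLaw]⟩
  have hpair : Pairwise fun j j' => IndepFun (fun z : ι → α => W j (z i) * W j (z i'))
      (fun z => W j' (z i) * W j' (z i')) (Measure.pi fun _ => ν) := fun j j' hjj' =>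
    (indepFun_pi_comp (hW j) (hW j') (hindep hjj')).comp hprod hprod
  have hslln := strong_law_ae_real (fun j (z : ι → α) => W j (z i) * W j (z i')) hint hpair
    fun j => (hident j).comp hprod
  rwa [hlimit] at hslln

end GramMatrix

section LatentVariable

variable {α Ω E : Type*} [MeasurableSpace α] [MeasurableSpace Ω] [NormedAddCommGroup E]
  [NormedSpace ℝ E] [ProperSpace E] [MeasurableSpace E] [BorelSpace E] {n : ℕ}

/-- The conditional probability that the sample `F (t i • c + x i, z i)`, `i < n`, falls in `S`
given the latent values `t` and the covariates `z`, when the noises `x i` are i.i.d. with law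
`ρ`. -/
def latentPower (ρ : Measure E) (c : E) (F : E × α → Ω) (S : Set (Fin n → Ω)) (t : Fin n → ℝ)
    (z : Fin n → α) : ℝ≥0∞ :=
  (Measure.pi fun _ => ρ) {x | (fun i => F (t i • c + x i, z i)) ∈ S}

variable {ρ : Measure E} [IsProbabilityMeasure ρ] {c : E} {F : E × α → Ω} {S : Set (Fin n → Ω)}

theorem measurable_latentPower (hF : Measurable F) (hS : MeasurableSet S) :
    Measurable fun p : (Fin n → ℝ) × (Fin n → α) => latentPower ρ c F S p.1 p.2 := by
  have hsample : Measurable fun p : ((Fin n → ℝ) × (Fin n → α)) × (Fin n → E) =>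
      fun i => F (p.1.1 i • c + p.2 i, p.1.2 i) := by fun_prop
  exact measurable_measure_prodMk_left (hS.preimage hsample)

theorem measurable_latentPower_normalizedSum (hF : Measurable F) (hS : MeasurableSet S)
    {W : ℕ → α → ℝ} (hW : ∀ j, Measurable (W j)) (k : ℕ) :
    Measurable fun p : (Fin n → α) × (Fin k → ℝ) =>
      latentPower ρ c F S (normalizedSum (fun j i => W j (p.1 i)) k p.2) p.1 := by
  have hpair : Measurable fun p : (Fin n → α) × (Fin k → ℝ) =>
      (normalizedSum (fun j i => W j (p.1 i)) k p.2, p.1) := by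
    unfold normalizedSum
    fun_prop
  exact (measurable_latentPower hF hS).comp hpair

theorem continuous_latentPower {μ : Measure E} [μ.IsAddHaarMeasure] (hρ : ρ ≪ μ)
    (hF : Measurable F) (hS : MeasurableSet S) (z : Fin n → α) :
    Continuous fun t => latentPower ρ c F S t z := by
  have hslice : MeasurableSet {y : Fin n → E | (fun i => F (y i, z i)) ∈ S} :=
    hS.preimage (by fun_prop)
  exact (continuous_measure_preimage_add_left (absolutelyContinuous_pi fun _ => hρ) hslice).comp
    (f := fun (t : Fin n → ℝ) i => t i • c) (by fun_prop)

theorem pi_map_apply_eq_lintegral {β γ : Type*} [MeasurableSpace β] [MeasurableSpace γ]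
    {μ : Measure β} {ν : Measure γ} [IsProbabilityMeasure μ] [IsProbabilityMeasure ν]
    {f : β × γ → Ω} (hf : Measurable f) (hS : MeasurableSet S) :
    (Measure.pi fun _ => (μ.prod ν).map f) S =
      ∫⁻ y, (Measure.pi fun _ => μ) {x | (fun i => f (x i, y i)) ∈ S} ∂Measure.pi fun _ => ν := by
  rw [← map_pi_comp hf, Measure.map_apply (by fun_prop) hS, pi_prod_apply _ _ (hS.preimage
    (by fun_prop))]
  rfl

variable {ν : Measure α} [IsProbabilityMeasure ν]

theorem pi_map_latent_apply (hF : Measurable F) (hS : MeasurableSet S) (κ : Measure ℝ)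
    [IsProbabilityMeasure κ] :
    (Measure.pi fun _ => ((ρ.prod κ).prod ν).map fun p => F (p.1.2 • c + p.1.1, p.2)) S =
      ∫⁻ z, ∫⁻ t, latentPower ρ c F S t z ∂(Measure.pi fun _ => κ) ∂Measure.pi fun _ => ν := by
  rw [pi_map_apply_eq_lintegral (by fun_prop) hS]
  refine lintegral_congr fun z => ?_
  have hslice : MeasurableSet
      {x : Fin n → E × ℝ | (fun i => F ((x i).2 • c + (x i).1, z i)) ∈ S} :=
    hS.preimage (by fun_prop)
  exact pi_prod_apply ρ κ hslice

theorem lintegral_latentPower_normalizedSum_le (hF : Measurable F) (hS : MeasurableSet S)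
    {W : ℕ → α → ℝ} (hW : ∀ j, Measurable (W j)) {K : ℝ≥0∞}
    (hK : ∀ s ∈ Submodule.span ℝ (Set.range W),
      (Measure.pi fun _ => (ρ.prod ν).map fun p => F (s p.2 • c + p.1, p.2)) S ≤ K) (k : ℕ) :
    ∫⁻ z, ∫⁻ w, latentPower ρ c F S (normalizedSum (fun j i => W j (z i)) k w) z
      ∂(Measure.pi fun _ : Fin k => gaussianReal 0 1) ∂(Measure.pi fun _ => ν) ≤ K := by
  rw [lintegral_lintegral_swap (measurable_latentPower_normalizedSum hF hS hW k).aemeasurable]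
  calc _ ≤ ∫⁻ _, K ∂Measure.pi fun _ : Fin k => gaussianReal 0 1 := lintegral_mono fun w => by
        let s : α → ℝ := (√k)⁻¹ • ∑ j : Fin k, w j • W j
        have hs : s ∈ Submodule.span ℝ (Set.range W) :=
          Submodule.smul_mem _ _ (Submodule.sum_mem _ fun j _ =>
            Submodule.smul_mem _ _ (Submodule.subset_span ⟨j, rfl⟩))
        have hsmeas : Measurable s := by fun_prop
        have hvalue (z : Fin n → α) :
            normalizedSum (fun j i => W j (z i)) k w = fun i => s (z i) := by
          ext i
          simp [normalizedSum, s]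
        simp only [hvalue]
        exact (pi_map_apply_eq_lintegral (by fun_prop) hS).symm.trans_le (hK s hs)
    _ = K := by rw [lintegral_const, measure_univ, mul_one]

theorem pi_latent_apply_le {μ : Measure E} [μ.IsAddHaarMeasure] (hρ : ρ ≪ μ) (hF : Measurable F)
    (hS : MeasurableSet S) {κ : Measure ℝ} [IsProbabilityMeasure κ] (hmem : MemLp id 2 κ)
    (hmean : ∫ x, x ∂κ = 0) (hvar : Var[id; κ] = 1) {W : ℕ → α → ℝ} (hW : ∀ j, Measurable (W j))
    (hlaw : ∀ j, ν.map (W j) = κ) (hindep : Pairwise fun i j => IndepFun (W i) (W j) ν) {K : ℝ≥0∞}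
    (hK : ∀ s ∈ Submodule.span ℝ (Set.range W),
      (Measure.pi fun _ => (ρ.prod ν).map fun p => F (s p.2 • c + p.1, p.2)) S ≤ K) :
    (Measure.pi fun _ => ((ρ.prod (gaussianReal 0 1)).prod ν).map
      fun p => F (p.1.2 • c + p.1.1, p.2)) S ≤ K := by
  have hgram : ∀ᵐ z ∂Measure.pi fun _ : Fin n => ν, ∀ i i', Tendsto (fun k : ℕ =>
      (∑ j ∈ Finset.range k, W j (z i) * W j (z i')) / (k : ℝ)) atTop
      (𝓝 (if i = i' then 1 else 0)) :=
    ae_all_iff.2 fun i => ae_all_iff.2 fun i' =>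
      ae_tendsto_average_gram hmem hmean hvar hW hlaw hindep i i'
  rw [pi_map_latent_apply hF hS]
  refine le_of_tendsto' (tendsto_lintegral_of_dominated_convergence (fun _ => 1)
    (fun k => (measurable_latentPower_normalizedSum hF hS hW k).lintegral_prod_right')
    (fun k => ae_of_all _ fun z => ?_) (by simp) (hgram.mono fun z hz => ?_))
    (lintegral_latentPower_normalizedSum_le hF hS hW hK)
  · exact (lintegral_mono fun w => prob_le_one).trans (by simp)
  · exact tendsto_lintegral_normalizedSum (C := 1) (tendsto_average_sq_sum hz)
      (continuous_latentPower hρ hF hS z) fun t => prob_le_one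

end LatentVariable

section ConditionalIndependence

variable {Ω α β γ δ : Type*} [MeasurableSpace Ω] [MeasurableSpace α] [MeasurableSpace β]
  [MeasurableSpace γ] [MeasurableSpace δ] {μ : Measure Ω} [IsProbabilityMeasure μ]

theorem condDistrib_ae_eq_const_of_indepFun [StandardBorelSpace δ] [Nonempty δ] {W : Ω → γ}
    {R : Ω → δ} (hW : Measurable W) (hR : Measurable R) (h : IndepFun W R μ) :
    condDistrib R W μ =ᵐ[μ.map W] Kernel.const γ (μ.map R) := by
  have := Measure.isProbabilityMeasure_map (μ := μ) hR.aemeasurable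
  refine condDistrib_ae_eq_of_measure_eq_compProd W hR.aemeasurable ?_
  rw [Measure.compProd_const,
    (indepFun_iff_map_prod_eq_prod_map_map hW.aemeasurable hR.aemeasurable).1 h]

theorem condExp_comap_ae_eq_integral_of_indepFun [StandardBorelSpace δ] [Nonempty δ] {W : Ω → γ}
    {R : Ω → δ} (hW : Measurable W) (hR : Measurable R) (h : IndepFun W R μ) {f : γ × δ → ℝ}
    (hf : Measurable f) (hint : Integrable (fun ω => f (W ω, R ω)) μ) :
    μ[fun ω => f (W ω, R ω)|MeasurableSpace.comap W inferInstance] =ᵐ[μ]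
      fun ω => ∫ r, f (W ω, r) ∂μ.map R := by
  filter_upwards [condExp_prod_ae_eq_integral_condDistrib hW hR.aemeasurable hf.stronglyMeasurable
    hint, ae_of_ae_map hW.aemeasurable (condDistrib_ae_eq_const_of_indepFun hW hR h)] with ω h₁ h₂
  rw [h₁, h₂, Kernel.const_apply]

theorem condIndepGiven_of_indepFun [StandardBorelSpace δ] [Nonempty δ] {T : Ω → β} {W : Ω → γ}
    {R : Ω → δ} (hT : Measurable T) (hW : Measurable W) (hR : Measurable R)
    (h : IndepFun (fun ω => (W ω, T ω)) R μ) {F : γ × δ → α} (hF : Measurable F) :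
    CondIndepGiven μ (fun ω => F (W ω, R ω)) T W := by
  rintro f g hf hg ⟨C, hC⟩ ⟨D, hD⟩
  have hfint : Integrable (fun ω => f (F (W ω, R ω))) μ :=
    .of_bound (Measurable.aestronglyMeasurable (by fun_prop)) C (ae_of_all _ fun ω => hC _)
  have hgint : Integrable (fun ω => g (T ω)) μ :=
    .of_bound (hg.comp hT).aestronglyMeasurable D (ae_of_all _ fun ω => hD _)
  have hfgint : Integrable (fun ω => f (F (W ω, R ω)) * g (T ω)) μ :=
    hfint.mul_bdd hgint.aestronglyMeasurable (ae_of_all _ fun ω => hD _)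
  let mean (w : γ) : ℝ := ∫ r, f (F (w, r)) ∂μ.map R
  have hmean : StronglyMeasurable mean := (hf.comp hF).stronglyMeasurable.integral_prod_right'
  have hfW : μ[fun ω => f (F (W ω, R ω))|MeasurableSpace.comap W inferInstance] =ᵐ[μ]
      fun ω => mean (W ω) :=
    condExp_comap_ae_eq_integral_of_indepFun hW hR (h.comp measurable_fst measurable_id)
      (hf.comp hF) hfint
  have hfgWT : μ[fun ω => f (F (W ω, R ω)) * g (T ω)|
      MeasurableSpace.comap (fun ω => (W ω, T ω)) inferInstance] =ᵐ[μ]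
      fun ω => mean (W ω) * g (T ω) := by
    refine (condExp_comap_ae_eq_integral_of_indepFun (hW.prodMk hT) hR h
      (f := fun p => f (F (p.1.1, p.2)) * g p.1.2) (by fun_prop) hfgint).trans ?_
    exact ae_of_all _ fun ω => integral_mul_const (g (T ω)) _
  have hWT : MeasurableSpace.comap W inferInstance ≤
      MeasurableSpace.comap (fun ω => (W ω, T ω)) inferInstance :=
    (measurable_fst.comp (comap_measurable fun ω => (W ω, T ω))).comap_le
  calc μ[fun ω => f (F (W ω, R ω)) * g (T ω)|MeasurableSpace.comap W inferInstance]
      =ᵐ[μ] μ[μ[fun ω => f (F (W ω, R ω)) * g (T ω)|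
        MeasurableSpace.comap (fun ω => (W ω, T ω)) inferInstance]|
        MeasurableSpace.comap W inferInstance] :=
        (condExp_condExp_of_le hWT (hW.prodMk hT).comap_le).symm
    _ =ᵐ[μ] μ[fun ω => mean (W ω) * g (T ω)|MeasurableSpace.comap W inferInstance] :=
        condExp_congr_ae hfgWT
    _ =ᵐ[μ] fun ω => mean (W ω) *
        (μ[fun ω => g (T ω)|MeasurableSpace.comap W inferInstance]) ω :=
        condExp_mul_of_stronglyMeasurable_left
          (hmean.comp_measurable (comap_measurable W))
          (integrable_condExp.congr hfgWT) hgint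
    _ =ᵐ[μ] _ := by
        filter_upwards [hfW] with ω hω
        rw [hω]

theorem condIndepFun_of_condIndepGiven [StandardBorelSpace Ω] {X : Ω → α} {V : Ω → β} {W : Ω → γ}
    (hX : Measurable X) (hV : Measurable V) (hW : Measurable W) (h : CondIndepGiven μ X V W) :
    CondIndepFun (MeasurableSpace.comap W inferInstance) hW.comap_le X V μ := by
  refine (condIndepFun_iff_condExp_inter_preimage_eq_mul hX hV).2 fun s t hs ht => ?_
  have hprod := h (s.indicator fun _ => 1) (t.indicator fun _ => 1)
    (measurable_const.indicator hs) (measurable_const.indicator ht)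
    ⟨1, fun a => by by_cases ha : a ∈ s <;> simp [ha]⟩
    ⟨1, fun b => by by_cases hb : b ∈ t <;> simp [hb]⟩
  have hinter : (fun ω => s.indicator (fun _ => (1 : ℝ)) (X ω) * t.indicator (fun _ => 1) (V ω)) =
      (X ⁻¹' s ∩ V ⁻¹' t).indicator fun _ => 1 := by
    ext ω
    by_cases hX : X ω ∈ s <;> by_cases hV : V ω ∈ t <;> simp [hX, hV]
  rwa [hinter] at hprod

theorem indepFun_of_condIndepGiven [StandardBorelSpace Ω] [StandardBorelSpace α] [Nonempty α]
    [StandardBorelSpace β] [Nonempty β] {X : Ω → α} {V : Ω → β} {W : Ω → γ}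
    (hX : Measurable X) (hV : Measurable V) (hW : Measurable W) (h : CondIndepGiven μ X V W)
    {G : γ × α → δ} (hG : Measurable G) (hGW : IndepFun (fun ω => G (W ω, X ω)) W μ) :
    IndepFun (fun ω => G (W ω, X ω)) V μ := by
  have hWX : Measurable fun ω => (W ω, X ω) := hW.prodMk hX
  have hkernel := ae_of_ae_map hWX.aemeasurable
    ((condIndepFun_iff_condDistrib_prod_ae_eq_prodMkRight hV hX hW).1
      (condIndepFun_of_condIndepGiven hX hV hW h))
  refine indepFun_iff_measure_inter_preimage_eq_mul.2 fun s t hs ht => ?_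
  have hε : Measurable fun ω => G (W ω, X ω) := hG.comp hWX
  have hcond : Measurable fun w => condDistrib V W μ w t := Kernel.measurable_coe _ ht
  have hindep : IndepFun (fun ω => s.indicator (1 : δ → ℝ≥0∞) (G (W ω, X ω)))
      (fun ω => condDistrib V W μ (W ω) t) μ :=
    hGW.comp (measurable_one.indicator hs) hcond
  calc μ ((fun ω => G (W ω, X ω)) ⁻¹' s ∩ V ⁻¹' t)
      = ∫⁻ ω in (fun ω => G (W ω, X ω)) ⁻¹' s,
          condDistrib V (fun ω => (W ω, X ω)) μ (W ω, X ω) t ∂μ :=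
        (setLIntegral_condDistrib_of_measurableSet hWX hV.aemeasurable ht
          ⟨G ⁻¹' s, hG hs, rfl⟩).symm
    _ = ∫⁻ ω in (fun ω => G (W ω, X ω)) ⁻¹' s, condDistrib V W μ (W ω) t ∂μ :=
        lintegral_congr_ae (ae_restrict_of_ae (hkernel.mono fun ω hω => congrArg (· t) hω))
    _ = ∫⁻ ω, s.indicator 1 (G (W ω, X ω)) * condDistrib V W μ (W ω) t ∂μ := by
        rw [← lintegral_indicator (hε hs)]
        exact lintegral_congr fun ω => by by_cases hω : G (W ω, X ω) ∈ s <;> simp [hω]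
    _ = (∫⁻ ω, s.indicator 1 (G (W ω, X ω)) ∂μ) * ∫⁻ ω, condDistrib V W μ (W ω) t ∂μ :=
        lintegral_mul_eq_lintegral_mul_lintegral_of_indepFun
          ((measurable_one.indicator hs).comp hε) (hcond.comp hW) hindep
    _ = μ ((fun ω => G (W ω, X ω)) ⁻¹' s) * μ (V ⁻¹' t) := by
        congr 1
        · exact lintegral_indicator_one (hε hs)
        · simpa using setLIntegral_condDistrib_of_measurableSet hW hV.aemeasurable ht .univ

end ConditionalIndependence

section InjectiveCovariance

variable {E F : Type*} [NormedAddCommGroup E] [NormedSpace ℝ E] [CompleteSpace E]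
  [MeasurableSpace E] [BorelSpace E] [SecondCountableTopology E]
  [NormedAddCommGroup F] [NormedSpace ℝ F] [CompleteSpace F]
  [MeasurableSpace F] [BorelSpace F] [SecondCountableTopology F]
  {μ : Measure E} {ν : Measure F} [IsGaussian μ] [IsGaussian ν]

omit [CompleteSpace E] [SecondCountableTopology E] [IsGaussian μ] in
theorem isGaussianMeasure_iff_isGaussian : IsGaussianMeasure μ ↔ IsGaussian μ :=
  ⟨isGaussian_of_map_eq_gaussianReal, fun _ L => ⟨_, _, IsGaussian.map_eq_gaussianReal L⟩⟩

theorem hasInjectiveCovariance_iff_variance :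
    HasInjectiveCovariance μ ↔ ∀ L : E →L[ℝ] ℝ, Var[L; μ] = 0 → L = 0 := by
  have hcov (L₁ L₂ : E →L[ℝ] ℝ) : covForm μ L₁ L₂ = covarianceBilinDual μ L₁ L₂ :=
    (covarianceBilinDual_apply IsGaussian.memLp_two_id L₁ L₂).symm
  simp only [HasInjectiveCovariance, hcov,
    ← covarianceBilinDual_self_eq_variance (IsGaussian.memLp_two_id (μ := μ))]
  refine ⟨fun h L hL => h L fun L₂ => ?_, fun h L hL => h L (hL L)⟩
  have hL0 : StrongDual.toLp (μ.map fun x => x - ∫ y, y ∂μ) 2 L = 0 := inner_self_eq_zero.1 hL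
  exact (congrArg (⟪·, StrongDual.toLp _ 2 L₂⟫) hL0).trans (inner_zero_left _)

omit [CompleteSpace E] [SecondCountableTopology E] [CompleteSpace F]
  [SecondCountableTopology F] in
theorem variance_continuousLinearMap_prod (L : E × F →L[ℝ] ℝ) :
    Var[L; μ.prod ν] = Var[L ∘L .inl ℝ E F; μ] + Var[L ∘L .inr ℝ E F; ν] := by
  rw [← variance_add_prod (IsGaussian.memLp_dual μ (L ∘L .inl ℝ E F) 2 (by simp))
    (IsGaussian.memLp_dual ν (L ∘L .inr ℝ E F) 2 (by simp))]
  exact congrArg (Var[·; μ.prod ν]) (funext fun p => (L.comp_inl_add_comp_inr p).symm)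

namespace HasInjectiveCovariance

theorem map_continuousLinearMap (hμ : HasInjectiveCovariance μ) {M : E →L[ℝ] F}
    (hM : Function.Surjective M) : HasInjectiveCovariance (μ.map M) := by
  rw [hasInjectiveCovariance_iff_variance] at hμ ⊢
  intro L hL
  rw [variance_map (by fun_prop) (by fun_prop)] at hL
  exact ContinuousLinearMap.ext fun y =>
    (hM y).elim fun x hx => hx ▸ DFunLike.congr_fun (hμ (L ∘L M) hL) x

theorem map_const_add (hμ : HasInjectiveCovariance μ) (c : E) :
    HasInjectiveCovariance (μ.map fun x => c + x) := by
  rw [hasInjectiveCovariance_iff_variance] at hμ ⊢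
  intro L hL
  rw [variance_map (by fun_prop) (by fun_prop)] at hL
  refine hμ L ?_
  rw [← hL, ← variance_const_add (by fun_prop) (L c)]
  congr with x
  exact (map_add L c x).symm

theorem prod (hμ : HasInjectiveCovariance μ) (hν : HasInjectiveCovariance ν) :
    HasInjectiveCovariance (μ.prod ν) := by
  rw [hasInjectiveCovariance_iff_variance] at hμ hν ⊢
  intro L hL
  rw [variance_continuousLinearMap_prod,
    add_eq_zero_iff_of_nonneg (variance_nonneg _ _) (variance_nonneg _ _)] at hL
  refine ContinuousLinearMap.ext fun p => ?_
  rw [← L.comp_inl_add_comp_inr p, hμ _ hL.1, hν _ hL.2]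
  exact add_zero 0

theorem covarianceBilinDual_self_pos (hμ : HasInjectiveCovariance μ) {L : StrongDual ℝ E}
    (hL : L ≠ 0) : 0 < covarianceBilinDual μ L L := by
  refine (covarianceBilinDual_self_nonneg L).lt_of_ne' fun h => hL ?_
  rw [covarianceBilinDual_self_eq_variance IsGaussian.memLp_two_id] at h
  exact hasInjectiveCovariance_iff_variance.1 hμ L h

theorem sq_covarianceBilinDual_lt (hμ : HasInjectiveCovariance μ) {L₁ L₂ : StrongDual ℝ E}
    (h : LinearIndependent ℝ ![L₁, L₂]) :
    covarianceBilinDual μ L₁ L₂ ^ 2 <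
      covarianceBilinDual μ L₁ L₁ * covarianceBilinDual μ L₂ L₂ := by
  have hL₂ : 0 < covarianceBilinDual μ L₂ L₂ := hμ.covarianceBilinDual_self_pos (h.ne_zero 1)
  have hresidual := hμ.covarianceBilinDual_self_pos
    (L := covarianceBilinDual μ L₂ L₂ • L₁ + -covarianceBilinDual μ L₁ L₂ • L₂)
    fun h₀ => hL₂.ne' (LinearIndependent.pair_iff.1 h _ _ h₀).1
  simp only [map_add, map_smul, add_apply, smul_apply, smul_eq_mul,
    covarianceBilinDual_comm L₂ L₁] at hresidual
  nlinarith

end HasInjectiveCovariance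

theorem hasInjectiveCovariance_gaussianReal (m : ℝ) {v : ℝ≥0} (hv : v ≠ 0) :
    HasInjectiveCovariance (gaussianReal m v) := by
  refine hasInjectiveCovariance_iff_variance.2 fun L hL => ?_
  rw [variance_continuousLinearMap_gaussianReal] at hL
  ext
  simpa [hv] using hL

end InjectiveCovariance

section Projection

variable {V F : Type*} [AddCommGroup V] [Module ℝ V] [NormedAddCommGroup F]
  [InnerProductSpace ℝ F]

theorem exists_orthonormal_comp_of_linearIndependent {T : V →ₗ[ℝ] F} (hT : Function.Injective T)
    {ℓ : ℕ → V} (hℓ : LinearIndependent ℝ ℓ) :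
    ∃ u : ℕ → V, (∀ j, u j ∈ Submodule.span ℝ (Set.range ℓ)) ∧ Orthonormal ℝ (T ∘ u) := by
  have hspan : Submodule.span ℝ (Set.range (InnerProductSpace.gramSchmidtNormed ℝ (T ∘ ℓ))) =
      (Submodule.span ℝ (Set.range ℓ)).map T := by
    rw [InnerProductSpace.span_gramSchmidtNormed_range, InnerProductSpace.span_gramSchmidt,
      Set.range_comp, Submodule.map_span]
  have hmem (j : ℕ) : InnerProductSpace.gramSchmidtNormed ℝ (T ∘ ℓ) j ∈
      (Submodule.span ℝ (Set.range ℓ)).map T :=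
    hspan ▸ Submodule.subset_span (Set.mem_range_self j)
  choose u hu hTu using hmem
  refine ⟨u, hu, ?_⟩
  rw [show T ∘ u = InnerProductSpace.gramSchmidtNormed ℝ (T ∘ ℓ) from funext hTu]
  exact InnerProductSpace.gramSchmidtNormed_orthonormal (hℓ.map' T (LinearMap.ker_eq_bot.2 hT))

theorem exists_mem_forall_inner_sub_eq_zero (T : V →ₗ[ℝ] F) (U : Submodule ℝ V)
    [FiniteDimensional ℝ U] (y : F) : ∃ a ∈ U, ∀ g ∈ U, ⟪y - T a, T g⟫ = 0 := by
  obtain ⟨a, ha, haT⟩ := (U.map T).starProjection_apply_mem y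
  refine ⟨a, ha, fun g hg => ?_⟩
  rw [haT]
  exact Submodule.starProjection_inner_eq_zero y (T g) (Submodule.mem_map_of_mem hg)

end Projection

section UncorrelatedFunctionals

variable {E F G ι : Type*} [NormedAddCommGroup E] [NormedSpace ℝ E] [CompleteSpace E]
  [MeasurableSpace E] [BorelSpace E] [SecondCountableTopology E]
  [NormedAddCommGroup F] [NormedSpace ℝ F]
  [NormedAddCommGroup G] [NormedSpace ℝ G]
  {μ : Measure E} [IsGaussian μ]

theorem exists_covarianceBilinDual_eq_apply (L : StrongDual ℝ E) :
    ∃ w : E, ∀ L' : StrongDual ℝ E, covarianceBilinDual μ L L' = L' w := by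
  refine ⟨∫ x, L (x - μ[id]) • (x - μ[id]) ∂μ, fun L' => ?_⟩
  have hint : Integrable (fun x => L (x - μ[id]) • (x - μ[id])) μ := by
    have hcenter : MemLp (fun x => x - μ[id]) 2 μ := IsGaussian.memLp_two_id.sub (memLp_const _)
    exact memLp_one_iff_integrable.1 (hcenter.smul (L.comp_memLp' hcenter))
  rw [covarianceBilinDual_apply' IsGaussian.memLp_two_id, ← L'.integral_comp_comm hint]
  simp only [map_smul, smul_eq_mul]

theorem covarianceBilinDual_comp_eq_zero_of_separating {ℓ : ι → StrongDual ℝ F}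
    (hℓ : ∀ z, (∀ i, ℓ i z = 0) → z = 0) {π : E →L[ℝ] F} {L : StrongDual ℝ E}
    (hL : ∀ i, covarianceBilinDual μ L (ℓ i ∘L π) = 0) (g : StrongDual ℝ F) :
    covarianceBilinDual μ L (g ∘L π) = 0 := by
  obtain ⟨w, hw⟩ := exists_covarianceBilinDual_eq_apply (μ := μ) L
  have hπw : π w = 0 := hℓ (π w) fun i => (hw (ℓ i ∘L π)).symm.trans (hL i)
  rw [hw, ContinuousLinearMap.comp_apply, hπw, map_zero]

omit [IsGaussian μ] [CompleteSpace E] [SecondCountableTopology E] in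
theorem exists_mem_span_covarianceBilinDual_sub_eq_zero [Finite ι] (L : StrongDual ℝ E)
    (π : E →L[ℝ] F) (ℓ : ι → StrongDual ℝ F) :
    ∃ a ∈ Submodule.span ℝ (Set.range ℓ), ∀ g ∈ Submodule.span ℝ (Set.range ℓ),
      covarianceBilinDual μ (L - a ∘L π) (g ∘L π) = 0 := by
  have := FiniteDimensional.span_of_finite ℝ (Set.finite_range ℓ)
  let T := StrongDual.toLp (𝕜 := ℝ) (μ.map fun x => x - ∫ y, y ∂μ) 2
  let precomp : StrongDual ℝ F →ₗ[ℝ] StrongDual ℝ E :=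
    ((ContinuousLinearMap.compL ℝ E F ℝ).flip π).toLinearMap
  obtain ⟨a, ha, horth⟩ :=
    exists_mem_forall_inner_sub_eq_zero (T.toLinearMap ∘ₗ precomp) (Submodule.span ℝ (Set.range ℓ))
      (T L)
  refine ⟨a, ha, fun g hg => (congrArg (⟪·, T (g ∘L π)⟫) ?_).trans (horth g hg)⟩
  exact map_sub T L (a ∘L π)

theorem exists_covarianceBilinDual_eq_ite (hμ : HasInjectiveCovariance μ)
    {ℓ : ℕ → StrongDual ℝ E} (hℓ : LinearIndependent ℝ ℓ) :
    ∃ u : ℕ → StrongDual ℝ E, (∀ j, u j ∈ Submodule.span ℝ (Set.range ℓ)) ∧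
      ∀ i j, covarianceBilinDual μ (u i) (u j) = if i = j then 1 else 0 := by
  let T := StrongDual.toLp (𝕜 := ℝ) (μ.map fun x => x - ∫ y, y ∂μ) 2
  have hT : Function.Injective T := by
    refine (injective_iff_map_eq_zero T).2 fun L hL => ?_
    refine hasInjectiveCovariance_iff_variance.1 hμ L ?_
    rw [← covarianceBilinDual_self_eq_variance IsGaussian.memLp_two_id]
    exact inner_self_eq_zero.2 hL
  obtain ⟨u, hu, horth⟩ := exists_orthonormal_comp_of_linearIndependent (T := T.toLinearMap) hT hℓ
  exact ⟨u, hu, orthonormal_iff_ite.1 horth⟩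

variable [MeasurableSpace F] [BorelSpace F] [CompleteSpace F] [SecondCountableTopology F]
  [MeasurableSpace G] [BorelSpace G] [CompleteSpace G] [SecondCountableTopology G]

theorem indepFun_iff_covarianceBilinDual_comp_eq_zero (A : E →L[ℝ] F) (B : E →L[ℝ] G) :
    IndepFun A B μ ↔ ∀ L₁ L₂, covarianceBilinDual μ (L₁ ∘L A) (L₂ ∘L B) = 0 := by
  simp only [covarianceBilinDual_eq_covariance (IsGaussian.memLp_two_id (μ := μ))]
  refine ⟨fun h L₁ L₂ => ?_, fun h => ?_⟩
  · exact (h.comp L₁.measurable L₂.measurable).covariance_eq_zero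
      (IsGaussian.memLp_dual μ (L₁ ∘L A) 2 (by simp))
      (IsGaussian.memLp_dual μ (L₂ ∘L B) 2 (by simp))
  · exact ((IsGaussian.hasGaussianLaw_id (μ := μ)).map_fun
      (A.prod B)).indepFun_of_covariance_strongDual h

theorem indepFun_functional_iff_covarianceBilinDual_eq_zero (L : StrongDual ℝ E) (B : E →L[ℝ] G) :
    IndepFun L B μ ↔ ∀ g, covarianceBilinDual μ L (g ∘L B) = 0 := by
  refine (indepFun_iff_covarianceBilinDual_comp_eq_zero L B).trans
    ⟨fun h g => h (.id ℝ ℝ) g, fun h L₁ g => ?_⟩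
  have hsmul : L₁ ∘L L = L₁ 1 • L := by
    ext x
    simpa [mul_comm] using L₁.map_smul (L x) 1
  rw [hsmul, map_smul, smul_apply, h g, smul_zero]

end UncorrelatedFunctionals

section SparseRegression

variable {E F G : Type*} [NormedAddCommGroup E] [NormedSpace ℝ E] [CompleteSpace E]
  [MeasurableSpace E] [BorelSpace E] [SecondCountableTopology E]
  [NormedAddCommGroup F] [NormedSpace ℝ F]
  [NormedAddCommGroup G] [NormedSpace ℝ G] [CompleteSpace G]
  [MeasurableSpace G] [BorelSpace G] [SecondCountableTopology G]
  {μ : Measure E} [IsGaussian μ]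

-- The residual of the regression on the first `r` coordinates is independent of those, hence by
-- conditional independence also of all the others.
theorem exists_mem_span_covarianceBilinDual_eq_zero_of_condIndepGiven {V : E →L[ℝ] G}
    {π : E →L[ℝ] F} {ℓ : ℕ → StrongDual ℝ F} (hℓ : ∀ z, (∀ k, ℓ k z = 0) → z = 0) {r : ℕ}
    (h : CondIndepGiven μ V (fun ω k => ℓ (r + k) (π ω)) (fun ω (i : Fin r) => ℓ i (π ω)))
    (L : StrongDual ℝ G) :
    ∃ a ∈ Submodule.span ℝ (Set.range ℓ),
      ∀ g, covarianceBilinDual μ (L ∘L V - a ∘L π) (g ∘L π) = 0 := by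
  obtain ⟨a, ha, horth⟩ := exists_mem_span_covarianceBilinDual_sub_eq_zero (μ := μ) (L ∘L V) π
    fun i : Fin r => ℓ i
  refine ⟨a, Submodule.span_mono (Set.range_comp_subset_range _ ℓ) ha,
    covarianceBilinDual_comp_eq_zero_of_separating hℓ fun k => ?_⟩
  let head : E →L[ℝ] (Fin r → ℝ) := .pi fun i => ℓ i ∘L π
  have hhead : IndepFun (L ∘L V - a ∘L π) head μ := by
    refine (indepFun_functional_iff_covarianceBilinDual_eq_zero _ _).2 fun g => ?_
    have hg : g ∘L head = (∑ i, g (fun j => if i = j then 1 else 0) • ℓ i) ∘L π := by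
      ext ω
      simpa [head, mul_comm] using
        LinearMap.pi_apply_eq_sum_univ g.toLinearMap (head ω)
    rw [hg]
    exact horth _ (Submodule.sum_smul_mem _ _ fun i _ => Submodule.subset_span ⟨i, rfl⟩)
  obtain hk | ⟨k, rfl⟩ := (lt_or_ge k r).imp_right Nat.exists_eq_add_of_le
  · exact horth _ (Submodule.subset_span ⟨⟨k, hk⟩, rfl⟩)
  obtain ⟨c, rfl⟩ := (Submodule.mem_span_range_iff_exists_fun ℝ).1 ha
  have hresidual : (L ∘L V - (∑ i, c i • ℓ i) ∘L π : StrongDual ℝ E) =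
      fun ω => (fun p : (Fin r → ℝ) × G => L p.2 - ∑ i, c i * p.1 i) (head ω, V ω) := by
    ext ω
    simp [head]
  have htail := indepFun_of_condIndepGiven V.measurable
    (measurable_pi_lambda _ fun k => (ℓ (r + k) ∘L π).measurable) head.measurable h
    (G := fun p : (Fin r → ℝ) × G => L p.2 - ∑ i, c i * p.1 i) (by fun_prop) (hresidual ▸ hhead)
  have hcoord := htail.comp measurable_id (measurable_pi_apply k)
  rw [Function.id_comp] at hcoord
  exact (indepFun_functional_iff_covarianceBilinDual_eq_zero _ (ℓ (r + k) ∘L π)).1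
    (hresidual ▸ hcoord) (.id ℝ ℝ)

end SparseRegression

section GaussianDecomposition

theorem exists_mul_eq_and_sq_lt {c p q : ℝ} (hq : 0 < q) (h : c ^ 2 < p * q) :
    ∃ α β, α * β = c ∧ α ^ 2 < p ∧ β ^ 2 < q := by
  obtain ⟨t, hct, htp⟩ := exists_between ((div_lt_iff₀ hq).2 h)
  have ht : 0 < t := (div_nonneg (sq_nonneg c) hq.le).trans_lt hct
  refine ⟨√t, c / √t, mul_div_cancel₀ c (Real.sqrt_pos.2 ht).ne', by rwa [Real.sq_sqrt ht.le], ?_⟩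
  rw [div_pow, Real.sq_sqrt ht.le]
  exact (div_lt_comm₀ hq ht).1 hct

theorem exists_map_const_add_eq_of_variance_eq {E : Type*} [NormedAddCommGroup E]
    [NormedSpace ℝ E] [CompleteSpace E] [MeasurableSpace E] [BorelSpace E]
    [SecondCountableTopology E] {μ ν : Measure E} [IsGaussian μ] [IsGaussian ν]
    (h : ∀ L : StrongDual ℝ E, Var[L; μ] = Var[L; ν]) :
    ∃ m, μ = ν.map fun x => m + x := by
  refine ⟨μ[id] - ν[id], Measure.ext_of_charFunDual (funext fun L => ?_)⟩
  rw [charFunDual_map_const_add, IsGaussian.charFunDual_eq', IsGaussian.charFunDual_eq',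
    covarianceBilinDual_self_eq_variance IsGaussian.memLp_two_id,
    covarianceBilinDual_self_eq_variance IsGaussian.memLp_two_id, h L, ← Complex.exp_add, map_sub]
  push_cast
  ring_nf

theorem continuousLinearMap_prod_real_apply (L : ℝ × ℝ →L[ℝ] ℝ) (x : ℝ × ℝ) :
    L x = L (1, 0) * x.1 + L (0, 1) * x.2 := by
  have hx : x = x.1 • (1, 0) + x.2 • (0, 1) := by ext <;> simp
  conv_lhs => rw [hx]
  rw [map_add, map_smul, map_smul, smul_eq_mul, smul_eq_mul, mul_comm, mul_comm x.2]

theorem variance_gaussianReal_smul_add (σ τ : ℝ≥0) (c : ℝ × ℝ) (L : ℝ × ℝ →L[ℝ] ℝ) :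
    Var[fun p => L (p.2 • c + p.1);
        ((gaussianReal 0 σ).prod (gaussianReal 0 τ)).prod (gaussianReal 0 1)] =
      L c ^ 2 + L (1, 0) ^ 2 * σ + L (0, 1) ^ 2 * τ := by
  let L' : (ℝ × ℝ) × ℝ →L[ℝ] ℝ :=
    L ∘L ((ContinuousLinearMap.snd ℝ (ℝ × ℝ) ℝ).smulRight c + .fst ℝ (ℝ × ℝ) ℝ)
  change Var[L'; _] = _
  simp only [variance_continuousLinearMap_prod, variance_continuousLinearMap_gaussianReal,
    Real.coe_toNNReal _ (sq_nonneg _)]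
  simp [L']
  ring

theorem exists_variance_eq_sq_add {μ : Measure (ℝ × ℝ)} [IsGaussian μ]
    (hμ : HasInjectiveCovariance μ) :
    ∃ (c : ℝ × ℝ) (σ τ : ℝ≥0), σ ≠ 0 ∧ τ ≠ 0 ∧ ∀ L : StrongDual ℝ (ℝ × ℝ),
      Var[L; μ] = L c ^ 2 + L (1, 0) ^ 2 * σ + L (0, 1) ^ 2 * τ := by
  let fst : StrongDual ℝ (ℝ × ℝ) := .fst ℝ ℝ ℝ
  let snd : StrongDual ℝ (ℝ × ℝ) := .snd ℝ ℝ ℝ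
  let B := covarianceBilinDual μ
  have hindep : LinearIndependent ℝ ![fst, snd] :=
    LinearIndependent.pair_iff.2 fun s t h =>
      ⟨by simpa [fst, snd] using DFunLike.congr_fun h ((1, 0) : ℝ × ℝ),
        by simpa [fst, snd] using DFunLike.congr_fun h ((0, 1) : ℝ × ℝ)⟩
  have hsnd : 0 < B snd snd := hμ.covarianceBilinDual_self_pos (hindep.ne_zero 1)
  have hdisc : B fst snd ^ 2 < B fst fst * B snd snd := hμ.sq_covarianceBilinDual_lt hindep
  obtain ⟨α, β, hαβ, hα, hβ⟩ := exists_mul_eq_and_sq_lt hsnd hdisc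
  refine ⟨(α, β), (B fst fst - α ^ 2).toNNReal, (B snd snd - β ^ 2).toNNReal,
    (Real.toNNReal_pos.2 (sub_pos.2 hα)).ne', (Real.toNNReal_pos.2 (sub_pos.2 hβ)).ne', fun L => ?_⟩
  have hcomb (s t : ℝ) : B (s • fst + t • snd) (s • fst + t • snd) =
      s ^ 2 * B fst fst + 2 * (s * t) * B fst snd + t ^ 2 * B snd snd := by
    simp only [map_add, map_smul, add_apply, smul_apply, smul_eq_mul,
      covarianceBilinDual_comm snd fst, B]
    ring
  have hvar : Var[L; μ] = B L L :=
    (covarianceBilinDual_self_eq_variance IsGaussian.memLp_two_id L).symm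
  have hL : L = L (1, 0) • fst + L (0, 1) • snd :=
    ContinuousLinearMap.ext (continuousLinearMap_prod_real_apply L)
  rw [hvar, Real.coe_toNNReal _ (sub_pos.2 hα).le, Real.coe_toNNReal _ (sub_pos.2 hβ).le,
    continuousLinearMap_prod_real_apply L (α, β)]
  conv_lhs => rw [hL, hcomb, ← hαβ]
  ring

theorem exists_eq_map_add_smul_add {μ : Measure (ℝ × ℝ)} [IsGaussian μ]
    (hμ : HasInjectiveCovariance μ) :
    ∃ (m c : ℝ × ℝ) (σ τ : ℝ≥0), σ ≠ 0 ∧ τ ≠ 0 ∧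
      μ = (((gaussianReal 0 σ).prod (gaussianReal 0 τ)).prod (gaussianReal 0 1)).map
        fun p => m + (p.2 • c + p.1) := by
  obtain ⟨c, σ, τ, hσ, hτ, hvar⟩ := exists_variance_eq_sq_add hμ
  let mix : (ℝ × ℝ) × ℝ →L[ℝ] ℝ × ℝ :=
    (ContinuousLinearMap.snd ℝ (ℝ × ℝ) ℝ).smulRight c + .fst ℝ (ℝ × ℝ) ℝ
  obtain ⟨m, hm⟩ := exists_map_const_add_eq_of_variance_eq (μ := μ)
      (ν := (((gaussianReal 0 σ).prod (gaussianReal 0 τ)).prod (gaussianReal 0 1)).map mix)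
      fun L => by
    rw [hvar, variance_map (by fun_prop) (by fun_prop)]
    exact (variance_gaussianReal_smul_add σ τ c L).symm
  refine ⟨m, c, σ, τ, hσ, hτ, ?_⟩
  rw [hm, Measure.map_map (by fun_prop) (by fun_prop)]
  rfl

end GaussianDecomposition

section StandardizedFunctionals

variable {E : Type*} [NormedAddCommGroup E] [NormedSpace ℝ E]

theorem exists_eq_const_add_of_mem_span {ι : Type*} {u : ι → StrongDual ℝ E} {t : ι → ℝ}
    {s : E → ℝ} (hs : s ∈ Submodule.span ℝ (Set.range fun i z => u i z - t i)) :
    ∃ s₀ : ℝ, ∃ v ∈ Submodule.span ℝ (Set.range u), ∀ z, s z = s₀ + v z := by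
  induction hs using Submodule.span_induction with
  | mem s h =>
    obtain ⟨i, rfl⟩ := h
    exact ⟨-t i, u i, Submodule.subset_span ⟨i, rfl⟩, fun _ => sub_eq_neg_add _ _⟩
  | zero => exact ⟨0, 0, Submodule.zero_mem _, fun _ => (add_zero 0).symm⟩
  | add s s' _ _ h h' =>
    obtain ⟨s₀, v, hv, hs⟩ := h
    obtain ⟨s₀', v', hv', hs'⟩ := h'
    refine ⟨s₀ + s₀', v + v', Submodule.add_mem _ hv hv', fun z => ?_⟩
    rw [Pi.add_apply, hs, hs', add_apply, add_add_add_comm]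
  | smul k s _ h =>
    obtain ⟨s₀, v, hv, hs⟩ := h
    refine ⟨k * s₀, k • v, Submodule.smul_mem _ k hv, fun z => ?_⟩
    rw [Pi.smul_apply, hs, smul_apply, smul_eq_mul, smul_eq_mul, mul_add]

variable [CompleteSpace E] [MeasurableSpace E] [BorelSpace E] [SecondCountableTopology E]

theorem exists_standardized_pairwise_indepFun {ν : Measure E} [IsGaussian ν]
    (hν : HasInjectiveCovariance ν) {ℓ : ℕ → StrongDual ℝ E} (hℓ : LinearIndependent ℝ ℓ) :
    ∃ u : ℕ → StrongDual ℝ E, (∀ j, u j ∈ Submodule.span ℝ (Set.range ℓ)) ∧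
      (∀ j, ν.map (fun z => u j z - ν[u j]) = gaussianReal 0 1) ∧
      Pairwise fun i j => IndepFun (fun z => u i z - ν[u i]) (fun z => u j z - ν[u j]) ν := by
  obtain ⟨u, hu, hcov⟩ := exists_covarianceBilinDual_eq_ite hν hℓ
  refine ⟨u, hu, fun j => ?_, fun i j hij => ?_⟩
  · have hvar : Var[u j; ν] = 1 := by
      rw [← covarianceBilinDual_self_eq_variance IsGaussian.memLp_two_id, hcov, if_pos rfl]
    have hlaw : ν.map (u j) = gaussianReal ν[u j] 1 := by
      rw [IsGaussian.map_eq_gaussianReal, hvar, Real.toNNReal_one]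
    calc ν.map (fun z => u j z - ν[u j])
        = (ν.map (u j)).map fun x => x - ν[u j] := by
          rw [Measure.map_map (by fun_prop) (by fun_prop)]
          rfl
      _ = gaussianReal 0 1 := by rw [hlaw, gaussianReal_map_sub_const, sub_self]
  · have hindep : IndepFun (u i) (u j) ν :=
      ((IsGaussian.hasGaussianLaw_id (μ := ν)).map_fun
        ((u i).prod (u j))).indepFun_of_covariance_eq_zero (by
          simpa [covarianceBilinDual_eq_covariance IsGaussian.memLp_two_id, hij] using hcov i j)
    exact hindep.comp (measurable_id.sub_const _) (measurable_id.sub_const _)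

end StandardizedFunctionals

section IndependenceTransfer

theorem indepFun_map_iff {Ω Ω' β γ : Type*} [MeasurableSpace Ω] [MeasurableSpace Ω']
    [MeasurableSpace β] [MeasurableSpace γ] {μ : Measure Ω} {f : Ω → Ω'} (hf : Measurable f)
    {U : Ω' → β} {V : Ω' → γ} (hU : Measurable U) (hV : Measurable V) :
    IndepFun U V (μ.map f) ↔ IndepFun (fun ω => U (f ω)) (fun ω => V (f ω)) μ := by
  rw [indepFun_iff_measure_inter_preimage_eq_mul, indepFun_iff_measure_inter_preimage_eq_mul]
  refine forall₄_congr fun s t hs ht => ?_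
  rw [Measure.map_apply hf (hU hs), Measure.map_apply hf (hV ht),
    Measure.map_apply hf ((hU hs).inter (hV ht))]
  rfl

theorem indepFun_prod_fst_fst {α β γ : Type*} [MeasurableSpace α] [MeasurableSpace β]
    [MeasurableSpace γ] (μ₁ : Measure α) (μ₂ : Measure β) (μ₃ : Measure γ)
    [IsProbabilityMeasure μ₁] [IsProbabilityMeasure μ₂] [IsProbabilityMeasure μ₃] :
    IndepFun (fun p => p.1.1) (fun p => (p.1.2, p.2)) ((μ₁.prod μ₂).prod μ₃) := by
  have h : IndepFun Prod.fst Prod.snd (μ₁.prod (μ₂.prod μ₃)) :=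
    indepFun_prod measurable_id measurable_id
  rw [← (measurePreserving_prodAssoc μ₁ μ₂ μ₃).map_eq] at h
  exact (indepFun_map_iff MeasurableEquiv.prodAssoc.measurable measurable_fst measurable_snd).1 h

end IndependenceTransfer

section RegressionModel

theorem eventually_mem_span_fin {V : Type*} [AddCommGroup V] [Module ℝ V] {ℓ : ℕ → V} {a : V}
    (ha : a ∈ Submodule.span ℝ (Set.range ℓ)) :
    ∀ᶠ r in atTop, a ∈ Submodule.span ℝ (Set.range fun i : Fin r => ℓ i) := by
  induction ha using Submodule.span_induction with
  | mem a h =>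
    obtain ⟨k, rfl⟩ := h
    exact (eventually_gt_atTop k).mono fun r hr => Submodule.subset_span ⟨⟨k, hr⟩, rfl⟩
  | zero => exact .of_forall fun r => Submodule.zero_mem _
  | add a b _ _ ha hb => filter_upwards [ha, hb] with r using Submodule.add_mem _
  | smul c a _ ha => exact ha.mono fun r => Submodule.smul_mem _ c

variable {E : Type*} [NormedAddCommGroup E] [NormedSpace ℝ E]

/-- The observation `(m₁ + a z + x, m₂ + b z + y, z)` produced by the noise `(x, y)` and the
covariate `z` in the linear regression with intercepts `m` and coefficients `a` and `b`. -/
def regressionMap (m : ℝ × ℝ) (a b : StrongDual ℝ E) (p : (ℝ × ℝ) × E) : ℝ × ℝ × E :=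
  (m.1 + a p.2 + p.1.1, m.2 + b p.2 + p.1.2, p.2)

variable [MeasurableSpace E]

/-- `X ⫫ Y | Z` for the law `P` of a triple `(X, Y, Z)`. -/
def IsNull (P : Measure (ℝ × ℝ × E)) : Prop :=
  CondIndepGiven P (fun ω => ω.1) (fun ω => ω.2.1) (fun ω => ω.2.2)

/-- Sparsity of the law `P` of a triple `(X, Y, Z)`: for some `r`, `(X, Y)` is conditionally
independent of the coordinates `(ℓ k Z)` for `k ≥ r` given those for `k < r`. -/
def IsSparse (ℓ : ℕ → StrongDual ℝ E) (P : Measure (ℝ × ℝ × E)) : Prop :=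
  ∃ r : ℕ, CondIndepGiven P (fun ω => (ω.1, ω.2.1)) (fun ω (k : ℕ) => ℓ (r + k) ω.2.2)
    (fun ω (i : Fin r) => ℓ i ω.2.2)

/-- The sparse null model `𝒫₀^Q` of the Gaussian laws of triples `(X, Y, Z)` where `Z` has the
prescribed law `ν`. -/
def sparseNull (ℓ : ℕ → StrongDual ℝ E) (ν : Measure E) : Set (Measure (ℝ × ℝ × E)) :=
  {P | IsProbabilityMeasure P ∧ IsGaussianMeasure P ∧ HasInjectiveCovariance P ∧ IsSparse ℓ P ∧
    IsNull P ∧ P.map (fun ω => ω.2.2) = ν}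

/-- The law of `(X, Y, Z)` when `X` and `Y` follow linear regressions on `Z ∼ ν` with independent
centred Gaussian noises of variances `σ` and `τ`. -/
def regressionLaw (ν : Measure E) (σ τ : ℝ≥0) (m : ℝ × ℝ) (a b : StrongDual ℝ E) :
    Measure (ℝ × ℝ × E) :=
  (((gaussianReal 0 σ).prod (gaussianReal 0 τ)).prod ν).map (regressionMap m a b)

variable [BorelSpace E] {ν : Measure E} {σ τ : ℝ≥0} {m : ℝ × ℝ} {a b : StrongDual ℝ E}

@[fun_prop]
theorem measurable_regressionMap : Measurable (regressionMap m a b) := by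
  unfold regressionMap
  fun_prop

instance [IsProbabilityMeasure ν] : IsProbabilityMeasure (regressionLaw ν σ τ m a b) :=
  Measure.isProbabilityMeasure_map (by fun_prop)

theorem map_covariate_regressionLaw [SFinite ν] :
    (regressionLaw ν σ τ m a b).map (fun ω => ω.2.2) = ν := by
  rw [regressionLaw, Measure.map_map (by fun_prop) (by fun_prop)]
  exact Measure.snd_prod

theorem isNull_regressionLaw [IsProbabilityMeasure ν] : IsNull (regressionLaw ν σ τ m a b) := by
  let residual (ω : ℝ × ℝ × E) : ℝ := ω.1 - (m.1 + a ω.2.2)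
  have hindep : IndepFun (fun ω => (ω.2.2, ω.2.1)) residual (regressionLaw ν σ τ m a b) := by
    refine (indepFun_map_iff (by fun_prop) (by fun_prop) (by fun_prop)).2 ?_
    simp only [residual, regressionMap, add_sub_cancel_left]
    exact (indepFun_prod_fst_fst (gaussianReal 0 σ) (gaussianReal 0 τ) ν).symm.comp
      (φ := fun q => (q.2, m.2 + b q.2 + q.1)) (by fun_prop) measurable_id
  have h := condIndepGiven_of_indepFun (by fun_prop) (by fun_prop) (by fun_prop) hindep
    (F := fun q => m.1 + a q.1 + q.2) (by fun_prop)
  simp only [residual, add_sub_cancel] at h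
  exact h

theorem isSparse_regressionLaw [IsProbabilityMeasure ν] {ℓ : ℕ → StrongDual ℝ E}
    (ha : a ∈ Submodule.span ℝ (Set.range ℓ)) (hb : b ∈ Submodule.span ℝ (Set.range ℓ)) :
    IsSparse ℓ (regressionLaw ν σ τ m a b) := by
  obtain ⟨r, ha, hb⟩ := ((eventually_mem_span_fin ha).and (eventually_mem_span_fin hb)).exists
  obtain ⟨c, hc⟩ := (Submodule.mem_span_range_iff_exists_fun ℝ).1 ha
  obtain ⟨d, hd⟩ := (Submodule.mem_span_range_iff_exists_fun ℝ).1 hb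
  let residual (ω : ℝ × ℝ × E) : ℝ × ℝ := (ω.1 - (m.1 + a ω.2.2), ω.2.1 - (m.2 + b ω.2.2))
  let head (z : E) (i : Fin r) : ℝ := ℓ i z
  let tail (z : E) (k : ℕ) : ℝ := ℓ (r + k) z
  have hhead : Measurable head := measurable_pi_lambda _ fun i => (ℓ i).measurable
  have htail : Measurable tail := measurable_pi_lambda _ fun k => (ℓ (r + k)).measurable
  have hindep : IndepFun (fun ω => (head ω.2.2, tail ω.2.2)) residual
      (regressionLaw ν σ τ m a b) := by
    refine (indepFun_map_iff (by fun_prop) (by fun_prop) (by fun_prop)).2 ?_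
    simp only [residual, regressionMap, add_sub_cancel_left]
    exact (indepFun_prod measurable_id measurable_id).symm.comp
      (φ := fun z => (head z, tail z)) (by fun_prop) measurable_id
  have h := condIndepGiven_of_indepFun (by fun_prop) (by fun_prop) (by fun_prop) hindep
    (F := fun q => (m.1 + ∑ i, c i * q.1 i + q.2.1, m.2 + ∑ i, d i * q.1 i + q.2.2))
    (by fun_prop)
  have hcoef (z : E) : ∑ i, c i * head z i = a z ∧ ∑ i, d i * head z i = b z := by
    simp [← hc, ← hd, head]
  simp only [residual, (hcoef _).1, (hcoef _).2, add_sub_cancel] at h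
  exact ⟨r, h⟩

variable [SecondCountableTopology E]

theorem regressionLaw_eq_map_map (ν : Measure E) (σ τ : ℝ≥0) (m : ℝ × ℝ) (a b : StrongDual ℝ E) :
    ∃ M : (ℝ × ℝ) × E →L[ℝ] ℝ × ℝ × E, Function.Surjective M ∧ regressionLaw ν σ τ m a b =
      ((((gaussianReal 0 σ).prod (gaussianReal 0 τ)).prod ν).map M).map
        fun ω => (m.1, m.2, 0) + ω := by
  refine ⟨(.fst ℝ ℝ ℝ ∘L .fst ℝ _ E + a ∘L .snd ℝ _ E).prod
      ((.snd ℝ ℝ ℝ ∘L .fst ℝ _ E + b ∘L .snd ℝ _ E).prod (.snd ℝ _ E)), fun ω => ?_, ?_⟩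
  · exact ⟨((ω.1 - a ω.2.2, ω.2.1 - b ω.2.2), ω.2.2), by simp⟩
  · rw [regressionLaw, Measure.map_map (by fun_prop) (by fun_prop)]
    congr 1
    ext p <;> simp [regressionMap] <;> ring

variable [CompleteSpace E]

instance isGaussian_regressionLaw [IsGaussian ν] : IsGaussian (regressionLaw ν σ τ m a b) := by
  obtain ⟨M, -, hM⟩ := regressionLaw_eq_map_map ν σ τ m a b
  rw [hM]
  infer_instance

theorem regressionLaw_mem_sparseNull [IsGaussian ν] (hν : HasInjectiveCovariance ν) (hσ : σ ≠ 0)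
    (hτ : τ ≠ 0) {ℓ : ℕ → StrongDual ℝ E} (ha : a ∈ Submodule.span ℝ (Set.range ℓ))
    (hb : b ∈ Submodule.span ℝ (Set.range ℓ)) : regressionLaw ν σ τ m a b ∈ sparseNull ℓ ν := by
  refine ⟨inferInstance, isGaussianMeasure_iff_isGaussian.2 inferInstance, ?_,
    isSparse_regressionLaw ha hb, isNull_regressionLaw, map_covariate_regressionLaw⟩
  obtain ⟨M, hMsurj, hM⟩ := regressionLaw_eq_map_map ν σ τ m a b
  rw [hM]
  exact ((((hasInjectiveCovariance_gaussianReal 0 hσ).prod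
    (hasInjectiveCovariance_gaussianReal 0 hτ)).prod hν).map_continuousLinearMap
      hMsurj).map_const_add _

end RegressionModel

section LatentRepresentation

variable {E : Type*} [NormedAddCommGroup E] [NormedSpace ℝ E]

/-- The residual pair `(x - a z, y - b z)` of an observation `(x, y, z)`, a left inverse of
`regressionMap 0 a b` up to the covariate. -/
def residualMap (a b : StrongDual ℝ E) : ℝ × ℝ × E →L[ℝ] ℝ × ℝ :=
  (.fst ℝ ℝ (ℝ × E) - a ∘L .snd ℝ ℝ E ∘L .snd ℝ ℝ (ℝ × E)).prod
    (.fst ℝ ℝ E ∘L .snd ℝ ℝ (ℝ × E) - b ∘L .snd ℝ ℝ E ∘L .snd ℝ ℝ (ℝ × E))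

theorem surjective_residualMap (a b : StrongDual ℝ E) : Function.Surjective (residualMap a b) :=
  fun p => ⟨(p.1, p.2, 0), by simp [residualMap]⟩

theorem regressionMap_residualMap (a b : StrongDual ℝ E) (ω : ℝ × ℝ × E) :
    regressionMap 0 a b (residualMap a b ω, ω.2.2) = ω := by
  simp [regressionMap, residualMap]

variable [MeasurableSpace E] [BorelSpace E] [SecondCountableTopology E] {P : Measure (ℝ × ℝ × E)}

theorem eq_map_regressionMap_of_indepFun [IsProbabilityMeasure P] {a b : StrongDual ℝ E}
    (h : IndepFun (residualMap a b) (fun ω => ω.2.2) P) {α : Type*} [MeasurableSpace α]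
    {κ : Measure α} [SFinite κ] {m : ℝ × ℝ} {f : α → ℝ × ℝ} (hf : Measurable f)
    (hlaw : P.map (residualMap a b) = κ.map fun x => m + f x) :
    P = (κ.prod (P.map fun ω => ω.2.2)).map fun p => regressionMap m a b (f p.1, p.2) := by
  calc P = P.map fun ω => regressionMap 0 a b (residualMap a b ω, ω.2.2) := by
        simp only [regressionMap_residualMap, Measure.map_id']
    _ = ((P.map (residualMap a b)).prod (P.map fun ω => ω.2.2)).map (regressionMap 0 a b) := by
        rw [← (indepFun_iff_map_prod_eq_prod_map_map (by fun_prop) (by fun_prop)).1 h,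
          Measure.map_map (by fun_prop) (by fun_prop)]
        rfl
    _ = ((κ.prod (P.map fun ω => ω.2.2)).map (Prod.map (fun x => m + f x) id)).map
          (regressionMap 0 a b) := by
        rw [hlaw, ← Measure.map_prod_map _ _ (by fun_prop) measurable_id, Measure.map_id]
    _ = _ := by
        rw [Measure.map_map (by fun_prop) (by fun_prop)]
        congr with p <;> simp [regressionMap] <;> ring

variable [CompleteSpace E] [IsGaussian P]

theorem exists_indepFun_residualMap_of_isSparse {ℓ : ℕ → StrongDual ℝ E}
    (hℓ : ∀ z, (∀ k, ℓ k z = 0) → z = 0) (h : IsSparse ℓ P) :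
    ∃ a ∈ Submodule.span ℝ (Set.range ℓ), ∃ b ∈ Submodule.span ℝ (Set.range ℓ),
      IndepFun (residualMap a b) (fun ω => ω.2.2) P := by
  obtain ⟨r, h⟩ := h
  let V : ℝ × ℝ × E →L[ℝ] ℝ × ℝ := (ContinuousLinearMap.fst ℝ ℝ (ℝ × E)).prod
    (.fst ℝ ℝ E ∘L .snd ℝ ℝ (ℝ × E))
  let π : ℝ × ℝ × E →L[ℝ] E := .snd ℝ ℝ E ∘L .snd ℝ ℝ (ℝ × E)
  have hregress (L : StrongDual ℝ (ℝ × ℝ)) :=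
    exists_mem_span_covarianceBilinDual_eq_zero_of_condIndepGiven (V := V) (π := π) hℓ h L
  obtain ⟨a, ha, hfst⟩ := hregress (.fst ℝ ℝ ℝ)
  obtain ⟨b, hb, hsnd⟩ := hregress (.snd ℝ ℝ ℝ)
  refine ⟨a, ha, b, hb, (indepFun_iff_covarianceBilinDual_comp_eq_zero _ π).2 fun L g => ?_⟩
  have hL : L ∘L residualMap a b = L (1, 0) • (.fst ℝ ℝ ℝ ∘L V - a ∘L π) +
      L (0, 1) • (.snd ℝ ℝ ℝ ∘L V - b ∘L π) :=
    ContinuousLinearMap.ext fun ω => continuousLinearMap_prod_real_apply L (residualMap a b ω)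
  rw [hL, map_add, map_smul, map_smul, add_apply, smul_apply, smul_apply, hfst, hsnd, smul_zero,
    smul_zero, add_zero]

theorem exists_eq_map_regressionMap_of_isSparse (hP : HasInjectiveCovariance P)
    {ℓ : ℕ → StrongDual ℝ E} (hℓ : ∀ z, (∀ k, ℓ k z = 0) → z = 0) (h : IsSparse ℓ P) :
    ∃ (m c : ℝ × ℝ) (σ τ : ℝ≥0), σ ≠ 0 ∧ τ ≠ 0 ∧ ∃ a ∈ Submodule.span ℝ (Set.range ℓ),
      ∃ b ∈ Submodule.span ℝ (Set.range ℓ),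
        P = ((((gaussianReal 0 σ).prod (gaussianReal 0 τ)).prod (gaussianReal 0 1)).prod
          (P.map fun ω => ω.2.2)).map fun p => regressionMap m a b (p.1.2 • c + p.1.1, p.2) := by
  obtain ⟨a, ha, b, hb, hindep⟩ := exists_indepFun_residualMap_of_isSparse hℓ h
  obtain ⟨m, c, σ, τ, hσ, hτ, hlaw⟩ := exists_eq_map_add_smul_add
    (hP.map_continuousLinearMap (surjective_residualMap a b))
  exact ⟨m, c, σ, τ, hσ, hτ, a, ha, b, hb,
    eq_map_regressionMap_of_indepFun hindep (f := fun q : (ℝ × ℝ) × ℝ => q.2 • c + q.1)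
      (by fun_prop) hlaw⟩

end LatentRepresentation

section TotalSequence

theorem linearIndependent_innerSL {ι H : Type*} [NormedAddCommGroup H] [InnerProductSpace ℝ H]
    {e : ι → H} (he : LinearIndependent ℝ e) : LinearIndependent ℝ fun i => innerSL ℝ (e i) :=
  he.map' (innerSL ℝ).toLinearMap (LinearMap.ker_eq_bot.2 fun _ _ => innerSL_inj.1)

theorem eq_zero_of_forall_inner_eq_zero {ι H : Type*} [NormedAddCommGroup H]
    [InnerProductSpace ℝ H] {e : ι → H}
    (he : (Submodule.span ℝ (Set.range e)).topologicalClosure = ⊤) {z : H}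
    (hz : ∀ i, ⟪e i, z⟫ = 0) : z = 0 := by
  have hzero : innerSL ℝ z = 0 :=
    ContinuousLinearMap.ext_on (Submodule.dense_iff_topologicalClosure_eq_top.2 he) <|
      Set.eqOn_range.2 (funext fun i => (real_inner_comm _ _).trans (hz i))
  exact innerSL_inj.1 (hzero.trans (map_zero _).symm)

end TotalSequence

theorem power_le_size_gaussian_sparse_general {E : Type*} [NormedAddCommGroup E] [NormedSpace ℝ E]
    [CompleteSpace E] [SecondCountableTopology E] [MeasurableSpace E] [BorelSpace E]
    {ℓ : ℕ → StrongDual ℝ E} (hindep : LinearIndependent ℝ ℓ)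
    (hsep : ∀ z, (∀ k, ℓ k z = 0) → z = 0) {Q : Measure (ℝ × ℝ × E)} (hgauss : IsGaussianMeasure Q)
    (hinj : HasInjectiveCovariance Q) (hsparse : IsSparse ℓ Q) {n : ℕ}
    {S : Set (Fin n → ℝ × ℝ × E)} (hS : MeasurableSet S) :
    (Measure.pi fun _ => Q) S ≤
      ⨆ P ∈ sparseNull ℓ (Q.map fun ω => ω.2.2), (Measure.pi fun _ => P) S := by
  have := isGaussianMeasure_iff_isGaussian.1 hgauss
  obtain ⟨m, c, σ, τ, hσ, hτ, a, ha, b, hb, hQ⟩ :=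
    exists_eq_map_regressionMap_of_isSparse hinj hsep hsparse
  let π : ℝ × ℝ × E →L[ℝ] E := .snd ℝ ℝ E ∘L .snd ℝ ℝ (ℝ × E)
  have hπ : Function.Surjective π := fun z => ⟨(0, 0, z), rfl⟩
  have hν : HasInjectiveCovariance (Q.map π) := hinj.map_continuousLinearMap hπ
  obtain ⟨u, hu, hlaw, hpair⟩ := exists_standardized_pairwise_indepFun hν hindep
  conv_lhs => rw [hQ]
  refine pi_latent_apply_le (μ := volume) (ν := Q.map π) (F := regressionMap m a b)
    ((gaussianReal_absolutelyContinuous 0 hσ).prod (gaussianReal_absolutelyContinuous 0 hτ))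
    (by fun_prop) hS (memLp_id_gaussianReal 2) integral_id_gaussianReal
    (by simp) (fun j => by fun_prop) hlaw hpair fun s hs => ?_
  obtain ⟨s₀, v, hv, hs⟩ := exists_eq_const_add_of_mem_span hs
  have hvℓ := Submodule.span_le.2 (Set.range_subset_iff.2 hu) hv
  have hnull := regressionLaw_mem_sparseNull (m := m + s₀ • c) hν hσ hτ
    (Submodule.add_mem _ ha (Submodule.smul_mem _ c.1 hvℓ))
    (Submodule.add_mem _ hb (Submodule.smul_mem _ c.2 hvℓ))
  have hshift : regressionMap (m + s₀ • c) (a + c.1 • v) (b + c.2 • v) =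
      fun p => regressionMap m a b (s p.2 • c + p.1, p.2) := by
    ext p <;> simp [regressionMap, hs] <;> ring
  rw [← hshift]
  exact le_iSup₂_of_le _ hnull le_rfl

/-- Proposition (hardness persists under sparsity): with `Z` expanded in a fixed orthonormal
basis `(e_k)`, even when all distributions in the model satisfy
`(X, Y) ⫫ (Z_{r+1}, Z_{r+2}, …) | (Z_1, …, Z_r)` for some `r`, the power of any conditional
independence test is at most its size over the null `𝒫₀^Q`. -/
theorem power_le_size_gaussian_sparse
    {HZ : Type*}
    [NormedAddCommGroup HZ] [InnerProductSpace ℝ HZ] [CompleteSpace HZ]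
    [TopologicalSpace.SeparableSpace HZ] [MeasurableSpace HZ] [BorelSpace HZ]
    (e : ℕ → HZ) (he : Orthonormal ℝ e)
    (hetotal : (Submodule.span ℝ (Set.range e)).topologicalClosure = ⊤)
    (Q : Measure (ℝ × ℝ × HZ))
    (hQprob : IsProbabilityMeasure Q)
    (hQgauss : IsGaussianMeasure Q)
    (hQinj : HasInjectiveCovariance Q)
    (hQsparse : ∃ r : ℕ, CondIndepGiven Q (fun ω => (ω.1, ω.2.1))
      (fun ω (k : ℕ) => ⟪e (r + k), ω.2.2⟫) (fun ω (i : Fin r) => ⟪e (i : ℕ), ω.2.2⟫))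
    (hQalt : ¬ CondIndepGiven Q (fun ω => ω.1) (fun ω => ω.2.1) (fun ω => ω.2.2))
    (n : ℕ)
    (ψ : (Fin n → ℝ × ℝ × HZ) → Bool)
    (hψ : Measurable ψ) :
    (Measure.pi fun _ : Fin n => Q) {x | ψ x = true} ≤
      ⨆ (P : Measure (ℝ × ℝ × HZ)) (_ :
        IsProbabilityMeasure P ∧ IsGaussianMeasure P ∧ HasInjectiveCovariance P ∧
          (∃ r : ℕ, CondIndepGiven P (fun ω => (ω.1, ω.2.1))
            (fun ω (k : ℕ) => ⟪e (r + k), ω.2.2⟫) (fun ω (i : Fin r) => ⟪e (i : ℕ), ω.2.2⟫)) ∧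
          CondIndepGiven P (fun ω => ω.1) (fun ω => ω.2.1) (fun ω => ω.2.2) ∧
          P.map (fun ω => ω.2.2) = Q.map (fun ω => ω.2.2)),
        (Measure.pi fun _ : Fin n => P) {x | ψ x = true} := by
  have := UniformSpace.secondCountable_of_separable HZ
  exact power_le_size_gaussian_sparse_general (ℓ := fun k => innerSL ℝ (e k))
    (linearIndependent_innerSL he.linearIndependent)
    (fun _ => eq_zero_of_forall_inner_eq_zero hetotal) hQgauss hQinj hQsparse
    (hψ (measurableSet_singleton true))
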